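/- Under Assumptions 1, 2 and 3, suppose in addition ‖x(t)‖_v ≤ x̄ almost surely for all t, and α_t = h/(t+t0) with h > 2/σ and t0 ≥ max(4h, τ). Then almost surely, for every t ≥ τ, ‖Σ_{k=τ}^{t} α_k B̃_{k,t} φ(k)‖_v ≤ (16 ε̄ h τ/σ) · 1/(t+1+t0), where ε̄ = 2x̄ + C + w̄/v̲. -/

import Mathlib

/-!
Off a null set the estimate is deterministic. One update moves the iterate by at most `α_t ε̄`
in the weighted norm. Since `τ ≤ t₀`, the step sizes in the delay window `k - τ ≤ j < k` are at
most `2 α_k`, so the iterate moves by at most `2 τ ε̄ α_k` over that window. As `F` is nonexpansive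
and the entries of `e_{i_k} e_{i_k}ᵀ - D_k` lie in `[-1, 1]`, this gives
`‖φ(k)‖ ≤ 4 τ ε̄ α_k`.

Diagonal matrices act by pointwise multiplication, so the weighted sums satisfy
`S_{t+1} = (1 - α_{t+1} D_{t+1}) S_t + α_{t+1} φ(t+1)`, and hence
`‖S_{t+1}‖ ≤ (1 - α_{t+1} σ) ‖S_t‖ + 4 τ ε̄ α_{t+1}²`.
The sequence `4 τ ε̄ c / (t + 1 + t₀)` is a supersolution of this recursion as soon as
`h² ≤ c (h σ - 1)`.
-/

open MeasureTheory Finset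

/-- Weighted infinity norm `‖x‖_v = max_i |x_i| / v_i`. -/
noncomputable def vnorm {n : ℕ} (v x : Fin n → ℝ) : ℝ := ⨆ i, |x i| / v i

section WeightedNorm

variable {n : ℕ} {v : Fin n → ℝ}

lemma vnorm_eq_norm_mul_inv (hv : ∀ i, 0 < v i) (x : Fin n → ℝ) : vnorm v x = ‖x * v⁻¹‖ := by
  have norm_apply (i : Fin n) : ‖(x * v⁻¹) i‖ = |x i| / v i := by
    rw [Pi.mul_apply, Pi.inv_apply, ← div_eq_mul_inv, norm_div, Real.norm_eq_abs,
      Real.norm_of_nonneg (hv i).le]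
  apply le_antisymm
  · exact Real.iSup_le (fun i => (norm_apply i).symm.trans_le (norm_le_pi_norm _ i)) (norm_nonneg _)
  · refine (pi_norm_le_iff_of_nonneg ?_).2 fun i => (norm_apply i).trans_le ?_
    · exact Real.iSup_nonneg fun i => div_nonneg (abs_nonneg _) (hv i).le
    · exact le_ciSup (f := fun i => |x i| / v i) (Set.finite_range _).bddAbove i

lemma vnorm_nonneg (hv : ∀ i, 0 < v i) (x : Fin n → ℝ) : 0 ≤ vnorm v x :=
  (vnorm_eq_norm_mul_inv hv x).symm ▸ norm_nonneg _

lemma vnorm_add_le (hv : ∀ i, 0 < v i) (x y : Fin n → ℝ) :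
    vnorm v (x + y) ≤ vnorm v x + vnorm v y := by
  simpa only [vnorm_eq_norm_mul_inv hv, add_mul] using norm_add_le (x * v⁻¹) (y * v⁻¹)

lemma vnorm_sub_le (hv : ∀ i, 0 < v i) (x y : Fin n → ℝ) :
    vnorm v (x - y) ≤ vnorm v x + vnorm v y := by
  simpa only [vnorm_eq_norm_mul_inv hv, sub_mul] using norm_sub_le (x * v⁻¹) (y * v⁻¹)

lemma vnorm_smul (hv : ∀ i, 0 < v i) (a : ℝ) (x : Fin n → ℝ) :
    vnorm v (a • x) = |a| * vnorm v x := by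
  rw [vnorm_eq_norm_mul_inv hv, vnorm_eq_norm_mul_inv hv, smul_mul_assoc, norm_smul,
    Real.norm_eq_abs]

lemma vnorm_mul_le (hv : ∀ i, 0 < v i) {a : Fin n → ℝ} {b : ℝ} (hb : 0 ≤ b)
    (ha : ∀ i, |a i| ≤ b) (x : Fin n → ℝ) : vnorm v (a * x) ≤ b * vnorm v x := by
  rw [vnorm_eq_norm_mul_inv hv, vnorm_eq_norm_mul_inv hv, mul_assoc]
  exact (norm_mul_le _ _).trans <|
    mul_le_mul_of_nonneg_right ((pi_norm_le_iff_of_nonneg hb).2 ha) (norm_nonneg _)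

lemma vnorm_const_le (hv : ∀ i, 0 < v i) (a : ℝ) : vnorm v (fun _ => a) ≤ |a| / ⨅ i, v i := by
  refine Real.iSup_le (fun i => ?_)
    (div_nonneg (abs_nonneg a) (Real.iInf_nonneg fun i => (hv i).le))
  have : Nonempty (Fin n) := ⟨i⟩
  obtain ⟨j, hj⟩ := exists_eq_ciInf_of_finite (f := v)
  exact div_le_div_of_nonneg_left (abs_nonneg a) (hj ▸ hv j)
    (ciInf_le (Set.finite_range v).bddBelow i)

lemma vnorm_sub_le_mul_of_increment_le (hv : ∀ i, 0 < v i) {x : ℕ → Fin n → ℝ} {s t : ℕ} {b : ℝ}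
    (hst : s ≤ t) (hinc : ∀ j, s ≤ j → j < t → vnorm v (x (j + 1) - x j) ≤ b) :
    vnorm v (x t - x s) ≤ ((t - s : ℕ) : ℝ) * b := by
  have vnorm_sub_eq_dist (y z : Fin n → ℝ) : vnorm v (y - z) = dist (z * v⁻¹) (y * v⁻¹) := by
    rw [vnorm_eq_norm_mul_inv hv, sub_mul, dist_comm, dist_eq_norm]
  simp only [vnorm_sub_eq_dist] at hinc ⊢
  simpa using dist_le_Ico_sum_of_dist_le (f := fun j => x j * v⁻¹) (d := fun _ => b) hst
    fun {j} => hinc j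

end WeightedNorm

lemma one_sub_mul_nonneg {a b : ℝ} (ha : a ∈ Set.Icc 0 1) (hb : b ≤ 1) : 0 ≤ 1 - a * b :=
  sub_nonneg.2 ((mul_le_of_le_one_right ha.1 hb).trans ha.2)

section DiscountedSum

variable {ι : Type*} {α : ℕ → ℝ} {d p : ℕ → ι → ℝ} {τ : ℕ}

/-- The vector `Σ_{k=τ}^t α_k B̃_{k,t} p(k)` with `B̃_{k,t} = ∏_{ℓ=k+1}^t (I - α_ℓ D_ℓ)`, where the
diagonal matrix `D_ℓ` is encoded by the vector `d ℓ` of its diagonal entries. -/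
def discountedSum (α : ℕ → ℝ) (d p : ℕ → ι → ℝ) (τ t : ℕ) : ι → ℝ := fun i =>
  ∑ k ∈ Finset.Icc τ t, α k * ((∏ ℓ ∈ Finset.Icc (k + 1) t, (1 - α ℓ * d ℓ i)) * p k i)

lemma discountedSum_self : discountedSum α d p τ τ = α τ • p τ := by
  ext i
  simp [discountedSum]

lemma discountedSum_succ {t : ℕ} (ht : τ ≤ t + 1) :
    discountedSum α d p τ (t + 1) =
      (1 - α (t + 1) • d (t + 1)) * discountedSum α d p τ t + α (t + 1) • p (t + 1) := by
  ext i
  have prod_succ {k : ℕ} (hk : k ≤ t) : ∏ ℓ ∈ Finset.Icc (k + 1) (t + 1), (1 - α ℓ * d ℓ i) =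
      (∏ ℓ ∈ Finset.Icc (k + 1) t, (1 - α ℓ * d ℓ i)) * (1 - α (t + 1) * d (t + 1) i) :=
    Finset.prod_Icc_succ_top (by omega) _
  simp only [discountedSum, Pi.add_apply, Pi.mul_apply, Pi.sub_apply, Pi.one_apply, Pi.smul_apply,
    smul_eq_mul]
  rw [Finset.sum_Icc_succ_top ht, Finset.mul_sum]
  congr 1
  · refine Finset.sum_congr rfl fun k hk => ?_
    rw [prod_succ (Finset.mem_Icc.1 hk).2]
    ring
  · simp

end DiscountedSum

section DiscountedSumBound

variable {n : ℕ} {v : Fin n → ℝ} {α : ℕ → ℝ} {d p : ℕ → Fin n → ℝ} {σ : ℝ} {τ : ℕ}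

lemma vnorm_discountedSum_succ_le (hv : ∀ i, 0 < v i) {t : ℕ} (ht : τ ≤ t + 1)
    (hα : α (t + 1) ∈ Set.Icc 0 1) (hσ : σ ≤ 1) (hd : ∀ i, d (t + 1) i ∈ Set.Icc σ 1) :
    vnorm v (discountedSum α d p τ (t + 1)) ≤
      (1 - α (t + 1) * σ) * vnorm v (discountedSum α d p τ t) +
        α (t + 1) * vnorm v (p (t + 1)) := by
  have factor_le (i : Fin n) : |(1 - α (t + 1) • d (t + 1)) i| ≤ 1 - α (t + 1) * σ := by
    change |1 - α (t + 1) * d (t + 1) i| ≤ _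
    rw [abs_of_nonneg (one_sub_mul_nonneg hα (hd i).2)]
    exact sub_le_sub_left (mul_le_mul_of_nonneg_left (hd i).1 hα.1) 1
  calc vnorm v (discountedSum α d p τ (t + 1))
      ≤ vnorm v ((1 - α (t + 1) • d (t + 1)) * discountedSum α d p τ t) +
          vnorm v (α (t + 1) • p (t + 1)) := by
        rw [discountedSum_succ ht]
        exact vnorm_add_le hv _ _
    _ ≤ _ := by
        rw [vnorm_smul hv, abs_of_nonneg hα.1]
        gcongr
        exact vnorm_mul_le hv (one_sub_mul_nonneg hα hσ) factor_le _

lemma vnorm_discountedSum_le_of_supersolution (hv : ∀ i, 0 < v i) (hα : ∀ t, α t ∈ Set.Icc 0 1)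
    (hσ : σ ≤ 1) (hd : ∀ t, τ ≤ t → ∀ i, d t i ∈ Set.Icc σ 1) {u : ℕ → ℝ}
    (hinit : α τ * vnorm v (p τ) ≤ u τ)
    (hsuper : ∀ t, τ ≤ t →
      (1 - α (t + 1) * σ) * u t + α (t + 1) * vnorm v (p (t + 1)) ≤ u (t + 1))
    {t : ℕ} (ht : τ ≤ t) : vnorm v (discountedSum α d p τ t) ≤ u t := by
  induction t, ht using Nat.le_induction with
  | base => rwa [discountedSum_self, vnorm_smul hv, abs_of_nonneg (hα τ).1]
  | succ t ht ih =>
    have bound_nonneg : 0 ≤ 1 - α (t + 1) * σ := one_sub_mul_nonneg (hα (t + 1)) hσ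
    calc vnorm v (discountedSum α d p τ (t + 1))
        ≤ (1 - α (t + 1) * σ) * vnorm v (discountedSum α d p τ t) +
            α (t + 1) * vnorm v (p (t + 1)) :=
          vnorm_discountedSum_succ_le hv (by omega) (hα (t + 1)) hσ (hd (t + 1) (by omega))
      _ ≤ (1 - α (t + 1) * σ) * u t + α (t + 1) * vnorm v (p (t + 1)) := by gcongr
      _ ≤ u (t + 1) := hsuper t ht

end DiscountedSumBound

section HarmonicStep

variable {n : ℕ} {v : Fin n → ℝ} {α : ℕ → ℝ} {h t0 c σ : ℝ} {τ : ℕ}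

lemma harmonic_step_mem_Ioc (hh : 0 < h) (hht0 : h ≤ t0) (t : ℕ) :
    h / ((t : ℝ) + t0) ∈ Set.Ioc 0 1 := by
  have hT : h ≤ (t : ℝ) + t0 := hht0.trans (le_add_of_nonneg_left t.cast_nonneg)
  have hT0 : 0 < (t : ℝ) + t0 := hh.trans_le hT
  exact ⟨div_pos hh hT0, (div_le_one hT0).2 hT⟩

lemma harmonic_step_le_two_mul (hh : 0 ≤ h) (ht0 : 0 < t0) (hτ : (τ : ℝ) ≤ t0) {j k : ℕ}
    (hk : k ≤ j + τ) : h / ((j : ℝ) + t0) ≤ 2 * (h / ((k : ℝ) + t0)) := by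
  have hk' : (k : ℝ) ≤ j + τ := by exact_mod_cast hk
  have denom_le : (k : ℝ) + t0 ≤ 2 * ((j : ℝ) + t0) := by linarith
  calc h / ((j : ℝ) + t0) = 2 * h / (2 * ((j : ℝ) + t0)) := by
        rw [mul_div_mul_left _ _ two_ne_zero]
    _ ≤ 2 * h / ((k : ℝ) + t0) := by gcongr
    _ = 2 * (h / ((k : ℝ) + t0)) := mul_div_assoc _ _ _

lemma harmonic_supersolution {T : ℝ} (hT : 0 < T) (hc0 : 0 ≤ c) (hc : h ^ 2 ≤ c * (h * σ - 1)) :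
    (1 - h / T * σ) * (c / T) + h / T * (h / T) ≤ c / (T + 1) :=
  calc (1 - h / T * σ) * (c / T) + h / T * (h / T)
      = (c * T - c * (h * σ) + h ^ 2) / T ^ 2 := by field_simp
    _ ≤ c * (T - 1) / T ^ 2 := by gcongr; linarith
    _ ≤ c / (T + 1) := by
        rw [div_le_div_iff₀ (by positivity) (by positivity)]
        linarith [mul_self_nonneg T]

lemma vnorm_discountedSum_le (hv : ∀ i, 0 < v i) (hh : 0 < h) (hht0 : h ≤ t0)
    (hα : ∀ t, α t = h / ((t : ℝ) + t0)) (hσ : σ ≤ 1) (hc0 : 0 ≤ c)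
    (hc : h ^ 2 ≤ c * (h * σ - 1)) {d p : ℕ → Fin n → ℝ} {K : ℝ}
    (hd : ∀ t, τ ≤ t → ∀ i, d t i ∈ Set.Icc σ 1) (hp : ∀ t, τ ≤ t → vnorm v (p t) ≤ K * α t)
    {t : ℕ} (ht : τ ≤ t) :
    vnorm v (discountedSum α d p τ t) ≤ K * (c / ((t : ℝ) + 1 + t0)) := by
  have hαmem (t : ℕ) : α t ∈ Set.Ioc 0 1 := hα t ▸ harmonic_step_mem_Ioc hh hht0 t
  have hK : 0 ≤ K :=
    nonneg_of_mul_nonneg_left ((vnorm_nonneg hv _).trans (hp τ le_rfl)) (hαmem τ).1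
  have denom_pos (t : ℕ) : 0 < (t : ℝ) + t0 := by positivity [hh.trans_le hht0]
  have supersolution (t : ℕ) (ht : τ ≤ t) :
      (1 - α t * σ) * (K * (c / ((t : ℝ) + t0))) + α t * vnorm v (p t) ≤
        K * (c / ((t : ℝ) + 1 + t0)) :=
    calc (1 - α t * σ) * (K * (c / ((t : ℝ) + t0))) + α t * vnorm v (p t)
        ≤ (1 - α t * σ) * (K * (c / ((t : ℝ) + t0))) + α t * (K * α t) := by
          gcongr
          exacts [(hαmem t).1.le, hp t ht]
      _ = K * ((1 - α t * σ) * (c / ((t : ℝ) + t0)) + α t * α t) := by ring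
      _ ≤ K * (c / ((t : ℝ) + t0 + 1)) := by
          rw [hα]
          exact mul_le_mul_of_nonneg_left (harmonic_supersolution (denom_pos t) hc0 hc) hK
      _ = K * (c / ((t : ℝ) + 1 + t0)) := by rw [add_right_comm]
  refine vnorm_discountedSum_le_of_supersolution (u := fun t => K * (c / ((t : ℝ) + 1 + t0))) hv
    (fun t => Set.Ioc_subset_Icc_self (hαmem t)) hσ hd ?_ (fun t ht => ?_) ht
  · have decay_nonneg : 0 ≤ (1 - α τ * σ) * (K * (c / ((τ : ℝ) + t0))) :=
      mul_nonneg (one_sub_mul_nonneg (Set.Ioc_subset_Icc_self (hαmem τ)) hσ)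
        (mul_nonneg hK (div_nonneg hc0 (denom_pos τ).le))
    exact (le_add_of_nonneg_left decay_nonneg).trans (supersolution τ le_rfl)
  · simpa only [Nat.cast_succ] using supersolution (t + 1) (ht.trans t.le_succ)

lemma vnorm_sub_delay_le (hv : ∀ i, 0 < v i) (hh : 0 < h) (hht0 : h ≤ t0) (hτt0 : (τ : ℝ) ≤ t0)
    (hα : ∀ t, α t = h / ((t : ℝ) + t0)) {x : ℕ → Fin n → ℝ} {ε : ℝ}
    (hinc : ∀ t, vnorm v (x (t + 1) - x t) ≤ α t * ε) {k : ℕ} (hk : τ ≤ k) :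
    vnorm v (x k - x (k - τ)) ≤ 2 * τ * ε * α k := by
  have hε : 0 ≤ ε := nonneg_of_mul_nonneg_right ((vnorm_nonneg hv _).trans (hinc 0))
    (hα 0 ▸ (harmonic_step_mem_Ioc hh hht0 0).1)
  have hinc_window (j : ℕ) (hj : k - τ ≤ j) : vnorm v (x (j + 1) - x j) ≤ 2 * α k * ε := by
    have step_le : α j ≤ 2 * α k := by
      rw [hα, hα]
      exact harmonic_step_le_two_mul hh.le (hh.trans_le hht0) hτt0
        (Nat.sub_le_iff_le_add.1 hj)
    exact (hinc j).trans (mul_le_mul_of_nonneg_right step_le hε)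
  calc vnorm v (x k - x (k - τ)) ≤ ((k - (k - τ) : ℕ) : ℝ) * (2 * α k * ε) :=
        vnorm_sub_le_mul_of_increment_le hv (k.sub_le τ) fun j hj _ => hinc_window j hj
    _ = 2 * τ * ε * α k := by rw [Nat.sub_sub_self hk]; ring

end HarmonicStep

section AsynchronousUpdate

variable {n : ℕ} {v : Fin n → ℝ} {F : (Fin n → ℝ) → Fin n → ℝ}

lemma vnorm_asynchronous_update_sub_le (hv : ∀ i, 0 < v i) {C xbar wbar a w : ℝ} (ha : 0 ≤ a)
    {x y : Fin n → ℝ} {j : Fin n} (hFx : vnorm v (F x) ≤ vnorm v x + C) (hx : vnorm v x ≤ xbar)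
    (hw : |w| ≤ wbar)
    (hy : ∀ i, y i = if i = j then x i + a * (F x i - x i + w) else x i) :
    vnorm v (y - x) ≤ a * (2 * xbar + C + wbar / ⨅ i, v i) := by
  have increment_eq : y - x = (fun i => if i = j then a else 0) * (F x - x + fun _ => w) := by
    ext i
    by_cases hij : i = j <;> simp [hy, hij]
  have mask_le (i : Fin n) : |if i = j then a else 0| ≤ a := by
    split_ifs <;> simp [abs_of_nonneg, ha]
  have noise_le : vnorm v (fun _ => w) ≤ wbar / ⨅ i, v i :=
    (vnorm_const_le hv w).trans
      (div_le_div_of_nonneg_right hw (Real.iInf_nonneg fun i => (hv i).le))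
  rw [increment_eq]
  refine (vnorm_mul_le hv ha mask_le _).trans (mul_le_mul_of_nonneg_left ?_ ha)
  linarith [vnorm_add_le hv (F x - x) fun _ => w, vnorm_sub_le hv (F x) x]

lemma vnorm_mul_displacement_sub_le (hv : ∀ i, 0 < v i) {a x y : Fin n → ℝ}
    (ha : ∀ i, |a i| ≤ 1) (hF : vnorm v (F x - F y) ≤ vnorm v (x - y)) :
    vnorm v (a * (F x - F y - (x - y))) ≤ 2 * vnorm v (x - y) := by
  linarith [vnorm_mul_le hv zero_le_one ha (F x - F y - (x - y)),
    vnorm_sub_le hv (F x - F y) (x - y)]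

end AsynchronousUpdate

lemma condExp_ite_one_zero_le_one {Ω : Type*} {m m0 : MeasurableSpace Ω} {μ : Measure Ω}
    (q : Ω → Prop) [DecidablePred q] :
    ∀ᵐ ω ∂μ, (μ[fun ω => if q ω then (1 : ℝ) else 0 | m]) ω ≤ 1 := by
  have indicator_le : ∀ᵐ ω ∂μ, |if q ω then (1 : ℝ) else 0| ≤ 1 :=
    Filter.Eventually.of_forall fun ω => by split_ifs <;> simp
  filter_upwards [ae_bdd_abs_condExp_of_ae_bdd_abs (m := m) indicator_le] with ω hω
  exact (le_abs_self _).trans hω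

/-- The smallest admissible constant is `c = h² / (h σ - 1)`; the constant `16 h / σ` of the paper
is `4 c` for `c = 4 h / σ`. -/
theorem SA_phi_weighted_sum_bound_general
    {Ω : Type*} {m0 : MeasurableSpace Ω} {μ : Measure Ω}
    {n : ℕ} {v : Fin n → ℝ} (hv : ∀ i, 0 < v i)
    {F : (Fin n → ℝ) → Fin n → ℝ} {C : ℝ}
    (hF : ∀ x y, vnorm v (F x - F y) ≤ vnorm v (x - y))
    (hFbd : ∀ x, vnorm v (F x) ≤ vnorm v x + C)
    {idx : ℕ → Ω → Fin n} {w : ℕ → Ω → ℝ} {wbar : ℝ} {α : ℕ → ℝ} {X : ℕ → Ω → Fin n → ℝ}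
    (hupd : ∀ t ω i, X (t + 1) ω i =
      if i = idx t ω then X t ω i + α t * (F (X t ω) i - X t ω i + w t ω) else X t ω i)
    (hw : ∀ t, ∀ᵐ ω ∂μ, |w t ω| ≤ wbar)
    {σ : ℝ} {τ : ℕ} {d : ℕ → Fin n → Ω → ℝ}
    (hd : ∀ t, τ ≤ t → ∀ i, ∀ᵐ ω ∂μ, d t i ω ∈ Set.Icc σ 1)
    {h t0 c : ℝ} (hh : 0 < h) (hht0 : h ≤ t0) (hτt0 : (τ : ℝ) ≤ t0)
    (hα : ∀ t, α t = h / ((t : ℝ) + t0)) (hc0 : 0 ≤ c) (hc : h ^ 2 ≤ c * (h * σ - 1))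
    {xbar : ℝ} (hX : ∀ t, ∀ᵐ ω ∂μ, vnorm v (X t ω) ≤ xbar)
    {phi : ℕ → Ω → Fin n → ℝ}
    (hphi : ∀ t ω i, phi t ω i =
      ((if idx t ω = i then (1 : ℝ) else 0) - d t i ω) *
        (F (X t ω) i - F (X (t - τ) ω) i - (X t ω i - X (t - τ) ω i))) :
    ∀ᵐ ω ∂μ, ∀ t, τ ≤ t →
      vnorm v (discountedSum α (fun ℓ i => d ℓ i ω) (fun k => phi k ω) τ t) ≤
        4 * τ * (2 * xbar + C + wbar / ⨅ i, v i) * (c / ((t : ℝ) + 1 + t0)) := by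
  simp only [← Filter.eventually_imp_distrib_left, ← ae_all_iff] at hw hd hX
  filter_upwards [hw, hd, hX] with ω hw hd hX t ht
  have hσ0 : 0 ≤ σ := by
    by_contra! hσ
    nlinarith [mul_nonneg hc0 (mul_pos_of_neg_of_neg hσ (neg_neg_of_pos hh)).le, pow_pos hh 2]
  have hσ1 : σ ≤ 1 := (hd τ le_rfl (idx 0 ω)).1.trans (hd τ le_rfl (idx 0 ω)).2
  have hinc (s : ℕ) :
      vnorm v (X (s + 1) ω - X s ω) ≤ α s * (2 * xbar + C + wbar / ⨅ i, v i) :=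
    vnorm_asynchronous_update_sub_le hv (hα s ▸ (harmonic_step_mem_Ioc hh hht0 s).1.le) (hFbd _)
      (hX s) (hw s) (hupd s ω)
  have hweight (k : ℕ) (hk : τ ≤ k) (i : Fin n) :
      |(if idx k ω = i then (1 : ℝ) else 0) - d k i ω| ≤ 1 :=
    abs_sub_le_of_nonneg_of_le (by positivity) (by split_ifs <;> simp)
      (hσ0.trans (hd k hk i).1) (hd k hk i).2
  have hphi_le (k : ℕ) (hk : τ ≤ k) :
      vnorm v (phi k ω) ≤ 4 * τ * (2 * xbar + C + wbar / ⨅ i, v i) * α k := by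
    have hdrift := vnorm_mul_displacement_sub_le hv (hweight k hk) (hF (X k ω) (X (k - τ) ω))
    have hdelay := vnorm_sub_delay_le (x := fun s => X s ω) hv hh hht0 hτt0 hα hinc hk
    rw [show phi k ω = _ from funext (hphi k ω)]
    exact hdrift.trans (by linarith)
  exact vnorm_discountedSum_le hv hh hht0 hα hσ1 hc0 hc hd hphi_le ht

lemma sq_le_four_mul_div_mul_sub_one {h σ : ℝ} (hσ : 0 < σ) (hh : 2 / σ < h) :
    h ^ 2 ≤ 4 * h / σ * (h * σ - 1) := by
  have hh0 : 0 < h := (div_pos two_pos hσ).trans hh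
  have hhσ : 2 < h * σ := (div_lt_iff₀ hσ).1 hh
  rw [div_mul_eq_mul_div, le_div_iff₀ hσ]
  nlinarith

/-- **Lemma 4.** Under Assumptions 1, 2 and 3, the almost-sure bound `‖x(t)‖_v ≤ x̄`, and
step sizes `α_t = h/(t+t₀)` with `h > 2/σ`, `t₀ ≥ max(4h, τ)`, almost surely, for every
`t ≥ τ`, `‖Σ_{k=τ}^t α_k B̃_{k,t} φ(k)‖_v ≤ (16ε̄hτ/σ)·1/(t+1+t₀)`,
where `ε̄ = 2x̄ + C + w̄/v̲`. -/
theorem SA_phi_weighted_sum_bound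
    {Ω : Type*} {m0 : MeasurableSpace Ω} (μ : Measure Ω) [IsProbabilityMeasure μ]
    (ℱ : Filtration ℕ m0)
    (n : ℕ) (hn : 0 < n) (v : Fin n → ℝ) (hv : ∀ i, 0 < v i)
    -- Assumption 1 (contraction)
    (F : (Fin n → ℝ) → (Fin n → ℝ)) (γ C : ℝ) (hγ0 : 0 < γ) (hγ1 : γ < 1) (hC : 0 < C)
    (hcontr : ∀ x y, vnorm v (F x - F y) ≤ γ * vnorm v (x - y))
    (hFbd : ∀ x, vnorm v (F x) ≤ γ * vnorm v x + C)
    (xstar : Fin n → ℝ) (hfix : F xstar = xstar)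
    -- the asynchronous SA scheme
    (idx : ℕ → Ω → Fin n) (hidx : ∀ t, Measurable[ℱ t] (idx t))
    (w : ℕ → Ω → ℝ) (wbar : ℝ)
    (α : ℕ → ℝ) (hα : ∀ t, α t ∈ Set.Ioc (0 : ℝ) 1)
    (X : ℕ → Ω → Fin n → ℝ) (hX0 : ∀ ω, X 0 ω = 0)
    (hupd : ∀ t ω i, X (t + 1) ω i =
      if i = idx t ω then X t ω i + α t * (F (X t ω) i - X t ω i + w t ω) else X t ω i)
    -- Assumption 2 (martingale difference noise)
    (hw_meas : ∀ t, Measurable[ℱ (t + 1)] (w t))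
    (hw_mean : ∀ t, μ[w t | ℱ t] =ᵐ[μ] 0)
    (hw_bd : ∀ t, ∀ᵐ ω ∂μ, |w t ω| ≤ wbar)
    -- Assumption 3 (sufficient exploration), with `d_{t,i} = P(i_t = i | ℱ_{t-τ})`
    (sg : ℝ) (τ : ℕ) (hsg0 : 0 < sg) (hsg1 : sg < 1) (hτ : 0 < τ)
    (d : ℕ → Fin n → Ω → ℝ)
    (hd : ∀ t i, d t i = μ[(fun ω => if idx t ω = i then (1 : ℝ) else 0) | ℱ (t - τ)])
    (hexpl : ∀ (i : Fin n) (t : ℕ), τ ≤ t → ∀ᵐ ω ∂μ, sg ≤ d t i ω)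
    -- step sizes
    (h t0 : ℝ) (hh : 2 / sg < h) (ht0 : max (4 * h) (τ : ℝ) ≤ t0)
    (hstep : ∀ t, α t = h / ((t : ℝ) + t0))
    -- almost sure boundedness of the iterates
    (xbar : ℝ) (hXbd : ∀ t, ∀ᵐ ω ∂μ, vnorm v (X t ω) ≤ xbar)
    -- the drift vector `φ(t)`
    (phi : ℕ → Ω → Fin n → ℝ)
    (hphi : ∀ t ω i, phi t ω i =
      ((if idx t ω = i then (1 : ℝ) else 0) - d t i ω) *
        (F (X t ω) i - F (X (t - τ) ω) i - (X t ω i - X (t - τ) ω i))) :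
    ∀ t, τ ≤ t → ∀ᵐ ω ∂μ,
      vnorm v (fun i => ∑ k ∈ Finset.Icc τ t,
          α k * ((∏ ℓ ∈ Finset.Icc (k + 1) t, (1 - α ℓ * d ℓ i ω)) * phi k ω i)) ≤
        (16 * (2 * xbar + C + wbar / ⨅ i, v i) * h * (τ : ℝ) / sg) *
          (1 / ((t : ℝ) + 1 + t0)) := by
  have hh0 : 0 < h := (div_pos two_pos hsg0).trans hh
  have ⟨h4t0, hτt0⟩ := max_le_iff.1 ht0
  have hγ (x : Fin n → ℝ) : γ * vnorm v x ≤ vnorm v x :=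
    mul_le_of_le_one_left (vnorm_nonneg hv x) hγ1.le
  have hd_mem (t : ℕ) (ht : τ ≤ t) (i : Fin n) : ∀ᵐ ω ∂μ, d t i ω ∈ Set.Icc sg 1 :=
    (hexpl i t ht).and (hd t i ▸ condExp_ite_one_zero_le_one (idx t · = i))
  intro t ht
  filter_upwards [SA_phi_weighted_sum_bound_general hv (fun x y => (hcontr x y).trans (hγ _))
    (fun x => (hFbd x).trans (add_le_add_left (hγ x) C)) hupd hw_bd hd_mem hh0
    (by linarith) hτt0 hstep (by positivity) (sq_le_four_mul_div_mul_sub_one hsg0 hh) hXbd hphi]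
    with ω hω
  exact (hω t ht).trans_eq (by ring)
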